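/- Let f(x) = c_p x^p |sin(π/x)| 1_{x ∈ (0,1)} be a probability density on ℝ with p ≥ 2 (c_p the normalizing constant). Then there exists c > 0 such that for all x ∈ (0,1) and all r ∈ (0,1/6), (1/r) ∫_{x−r}^{x+r} f(y) dy ≥ c f(x). -/

import Mathlib

open MeasureTheory

/-!
At scale `r ≤ x ^ 2` the argument `π / y` moves by at most `π / 3` as `y` moves by at most `r / 4`
from `x`. Since `sin (θ + δ) = sin θ * cos δ + cos θ * sin δ`, moving `θ = π / x` in the direction
in which both summands have the same sign keeps `|sin (π / y)| ≥ |sin (π / x)| / 2`, so on one side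
of `x` the density stays comparable to its value at `x`.

At scale `r ≥ x ^ 2` the interval `[x, x + r]` sees whole oscillations: `|sin| ≥ sin ^ 2` and a
van der Corput bound for `∫ cos (2 * π / y)` show that `|sin (π / y)|` has mean at least `1 / 6`
there, while `y ^ p ≥ x ^ p`.
-/

section OscillatingPower

open Set Real

lemma hasDerivAt_sq_mul_one_sub_sin_div (ω : ℝ) {y : ℝ} (hy : y ≠ 0) :
    HasDerivAt (fun z ↦ z ^ 2 * (1 - sin (ω / z)))
      (2 * y * (1 - sin (ω / y)) + ω * cos (ω / y)) y := by
  have hdiv : HasDerivAt (fun z ↦ ω / z) (-ω / y ^ 2) y := by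
    simpa using (hasDerivAt_const y ω).fun_div (hasDerivAt_id' y) hy
  refine ((hasDerivAt_pow 2 y).fun_mul (hdiv.sin.const_sub 1)).congr_deriv ?_
  field_simp
  ring

lemma continuousOn_const_div_Icc (ω : ℝ) {a b : ℝ} (ha : 0 < a) :
    ContinuousOn (fun y ↦ ω / y) (Icc a b) :=
  continuousOn_const.div continuousOn_id fun _ hy ↦ (ha.trans_le hy.1).ne'

lemma integral_cos_div_le {a b ω : ℝ} (ha : 0 < a) (hab : a ≤ b) (hω : 0 < ω) :
    ∫ y in a..b, cos (ω / y) ≤ 2 * b ^ 2 / ω := by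
  -- `-y ^ 2 * sin (ω / y) / ω` is a primitive of `cos (ω / y)` up to the error
  -- `2 * y * sin (ω / y) / ω`; adding `y ^ 2 / ω` gives this error a sign.
  let G : ℝ → ℝ := fun y ↦ y ^ 2 * (1 - sin (ω / y)) / ω
  have hG : ∀ y ∈ Icc a b,
      HasDerivAt G ((2 * y * (1 - sin (ω / y)) + ω * cos (ω / y)) / ω) y := fun y hy ↦
    (hasDerivAt_sq_mul_one_sub_sin_div ω (ha.trans_le hy.1).ne').div_const ω
  have hcos_le : ∀ y ∈ Ioo a b,
      cos (ω / y) ≤ (2 * y * (1 - sin (ω / y)) + ω * cos (ω / y)) / ω := fun y hy ↦ by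
    have : 0 ≤ y * (1 - sin (ω / y)) :=
      mul_nonneg (ha.trans hy.1).le (sub_nonneg.2 (sin_le_one _))
    rw [le_div_iff₀ hω]
    linarith
  calc ∫ y in a..b, cos (ω / y)
      ≤ G b - G a := by
        refine intervalIntegral.integral_le_sub_of_hasDeriv_right_of_le hab
          (fun y hy ↦ (hG y hy).continuousAt.continuousWithinAt)
          (fun y hy ↦ (hG y (Ioo_subset_Icc_self hy)).hasDerivWithinAt)
          (continuous_cos.comp_continuousOn (continuousOn_const_div_Icc ω ha)).integrableOn_Icc
          hcos_le
    _ ≤ G b := by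
        have : 0 ≤ 1 - sin (ω / a) := sub_nonneg.2 (sin_le_one _)
        exact sub_le_self _ (by positivity)
    _ ≤ 2 * b ^ 2 / ω := by
        have : 1 - sin (ω / b) ≤ 2 := by linarith [neg_one_le_sin (ω / b)]
        rw [mul_comm 2]
        exact div_le_div_of_nonneg_right (mul_le_mul_of_nonneg_left this (sq_nonneg b)) hω.le

lemma intervalIntegrable_abs_sin_div (ω : ℝ) {a b : ℝ} (ha : 0 < a) (hab : a ≤ b) :
    IntervalIntegrable (fun y ↦ |sin (ω / y)|) volume a b :=
  ((continuous_sin.comp_continuousOn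
    (continuousOn_const_div_Icc ω ha)).abs).intervalIntegrable_of_Icc hab

lemma le_integral_abs_sin_div {a b ω : ℝ} (ha : 0 < a) (hab : a ≤ b) (hω : 0 < ω) :
    (b - a) / 2 - b ^ 2 / (2 * ω) ≤ ∫ y in a..b, |sin (ω / y)| := by
  have hcos_int : IntervalIntegrable (fun y ↦ cos (2 * ω / y)) volume a b :=
    (continuous_cos.comp_continuousOn
      (continuousOn_const_div_Icc (2 * ω) ha)).intervalIntegrable_of_Icc hab
  have hsq_le : ∀ y, 1 / 2 - cos (2 * ω / y) / 2 ≤ |sin (ω / y)| := fun y ↦ by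
    rw [mul_div_assoc, ← sin_sq_eq_half_sub, ← sq_abs]
    exact pow_le_of_le_one (abs_nonneg _) (abs_sin_le_one _) two_ne_zero
  calc (b - a) / 2 - b ^ 2 / (2 * ω)
      = (b - a) / 2 - 2 * b ^ 2 / (2 * ω) / 2 := by ring
    _ ≤ (b - a) / 2 - (∫ y in a..b, cos (2 * ω / y)) / 2 := by
        gcongr
        exact integral_cos_div_le ha hab (by positivity)
    _ = ∫ y in a..b, (1 / 2 - cos (2 * ω / y) / 2) := by
        rw [intervalIntegral.integral_sub intervalIntegrable_const (hcos_int.div_const 2),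
          intervalIntegral.integral_const, intervalIntegral.integral_div, smul_eq_mul, mul_one_div]
    _ ≤ ∫ y in a..b, |sin (ω / y)| :=
        intervalIntegral.integral_mono hab
          (intervalIntegrable_const.sub (hcos_int.div_const 2))
          (intervalIntegrable_abs_sin_div ω ha hab) hsq_le

lemma abs_sin_mul_cos_le_abs_sin_add {θ δ : ℝ} (h : 0 ≤ sin (2 * θ) * sin (2 * δ)) :
    |sin θ * cos δ| ≤ |sin (θ + δ)| := by
  have hprod : 0 ≤ (sin θ * cos δ) * (cos θ * sin δ) := by
    rw [sin_two_mul, sin_two_mul] at h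
    linarith
  rw [sin_add, ← sq_le_sq, add_sq]
  linarith [sq_nonneg (cos θ * sin δ)]

lemma half_abs_sin_le_abs_sin_add {θ δ : ℝ} (hδ : |δ| ≤ π / 3) (h : 0 ≤ sin (2 * θ) * δ) :
    |sin θ| / 2 ≤ |sin (θ + δ)| := by
  have hcos : 1 / 2 ≤ cos δ := by
    rw [← cos_pi_div_three, ← cos_abs δ]
    exact cos_le_cos_of_nonneg_of_le_pi (abs_nonneg δ) (by linarith [pi_pos]) hδ
  have hsin : 0 ≤ sin (2 * θ) * sin (2 * δ) := by
    have ⟨hδ_lower, hδ_upper⟩ := abs_le.1 hδ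
    rcases lt_trichotomy δ 0 with hneg | rfl | hpos
    · exact mul_nonneg_of_nonpos_of_nonpos (nonpos_of_mul_nonneg_left h hneg)
        (sin_nonpos_of_nonpos_of_neg_pi_le (by linarith) (by linarith))
    · simp
    · exact mul_nonneg (nonneg_of_mul_nonneg_left h hpos)
        (sin_nonneg_of_nonneg_of_le_pi (by linarith) (by linarith))
  calc |sin θ| / 2 = |sin θ| * (1 / 2) := by ring
    _ ≤ |sin θ| * |cos δ| := by gcongr; exact hcos.trans (le_abs_self _)
    _ = |sin θ * cos δ| := (abs_mul _ _).symm
    _ ≤ |sin (θ + δ)| := abs_sin_mul_cos_le_abs_sin_add hsin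

lemma half_abs_sin_pi_div_le {x y : ℝ} (hx : 0 < x) (hy : 3 / 4 * x ≤ y)
    (hxy : |x - y| ≤ x ^ 2 / 4) (h : 0 ≤ sin (2 * (π / x)) * (x - y)) :
    |sin (π / x)| / 2 ≤ |sin (π / y)| := by
  have hy_pos : 0 < y := by linarith
  have hshift : π / y = π / x + π / (x * y) * (x - y) := by
    field_simp
    ring
  rw [hshift]
  apply half_abs_sin_le_abs_sin_add
  · calc |π / (x * y) * (x - y)| = π / (x * y) * |x - y| := by
          rw [abs_mul, abs_of_pos (by positivity)]
      _ ≤ π / (x * (3 / 4 * x)) * (x ^ 2 / 4) := by gcongr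
      _ = π / 3 := by field_simp
  · rw [mul_left_comm]
    positivity

lemma sin_two_mul_pi_div_pos {x : ℝ} (hx : x ∈ Ioo (2 / 3) 1) : 0 < sin (2 * (π / x)) := by
  have hx_pos : 0 < x := by linarith [hx.1]
  have hlower : π < π / x := by
    rw [lt_div_iff₀ hx_pos]
    exact mul_lt_of_lt_one_right pi_pos hx.2
  have hupper : π / x < 3 / 2 * π := by
    rw [div_lt_iff₀ hx_pos]
    nlinarith [pi_pos, hx.1]
  rw [← sin_sub_two_pi]
  exact sin_pos_of_pos_of_lt_pi (by linarith) (by linarith)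

lemma sub_mul_le_integral_of_forall_le {g : ℝ → ℝ} {a b u v m : ℝ} (hg : Integrable g)
    (hg_nonneg : 0 ≤ g) (hau : a ≤ u) (huv : u ≤ v) (hvb : v ≤ b)
    (hm : ∀ y ∈ Icc u v, m ≤ g y) :
    (v - u) * m ≤ ∫ y in a..b, g y :=
  calc (v - u) * m = ∫ _ in u..v, m := by rw [intervalIntegral.integral_const, smul_eq_mul]
    _ ≤ ∫ y in u..v, g y :=
        intervalIntegral.integral_mono_on huv intervalIntegrable_const hg.intervalIntegrable hm
    _ ≤ ∫ y in a..b, g y :=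
        intervalIntegral.integral_mono_interval hau huv hvb (.of_forall hg_nonneg)
          hg.intervalIntegrable

/-- The density `f` of the theorem without its normalizing constant. -/
noncomputable def oscillatingPower (p : ℝ) : ℝ → ℝ :=
  (Ioo 0 1).indicator fun x ↦ x ^ p * |sin (π / x)|

variable {p x r : ℝ}

lemma oscillatingPower_of_mem (hx : x ∈ Ioo 0 1) :
    oscillatingPower p x = x ^ p * |sin (π / x)| :=
  indicator_of_mem hx _

lemma oscillatingPower_nonneg : 0 ≤ oscillatingPower p :=
  indicator_nonneg fun x hx ↦ by
    have := hx.1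
    positivity

lemma oscillatingPower_le_rpow (hx : 0 ≤ x) : oscillatingPower p x ≤ x ^ p :=
  indicator_apply_le' (fun _ ↦ mul_le_of_le_one_right (rpow_nonneg hx p) (abs_sin_le_one _))
    fun _ ↦ rpow_nonneg hx p

lemma integrable_oscillatingPower (hp : 0 ≤ p) : Integrable (oscillatingPower p) := by
  refine (integrable_indicator_iff measurableSet_Ioo).2 ?_
  have hmeas : Measurable fun x ↦ x ^ p * |sin (π / x)| := by fun_prop
  refine Measure.integrableOn_of_bounded (M := 1) (by simp) hmeas.aestronglyMeasurable ?_
  refine ae_restrict_of_forall_mem measurableSet_Ioo fun x hx ↦ ?_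
  rw [norm_mul, norm_rpow_of_nonneg hx.1.le, norm_eq_abs, norm_eq_abs, abs_abs, abs_of_pos hx.1]
  exact mul_le_one₀ (rpow_le_one hx.1.le hx.2.le hp) (abs_nonneg _) (abs_sin_le_one _)

lemma mul_oscillatingPower_le_oscillatingPower {y : ℝ} (hp : 0 ≤ p) (hx : x ∈ Ioo 0 1) (hy : y < 1)
    (hxy : |x - y| ≤ x ^ 2 / 4) (h : 0 ≤ sin (2 * (π / x)) * (x - y)) :
    (3 / 4) ^ p / 2 * oscillatingPower p x ≤ oscillatingPower p y := by
  have hx_pos : 0 < x := hx.1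
  have hy_lower : 3 / 4 * x ≤ y := by nlinarith [(abs_le.1 hxy).2, hx.2]
  rw [oscillatingPower_of_mem hx, oscillatingPower_of_mem ⟨by linarith, hy⟩]
  calc (3 / 4) ^ p / 2 * (x ^ p * |sin (π / x)|)
      = (3 / 4 * x) ^ p * (|sin (π / x)| / 2) := by
        rw [mul_rpow (by norm_num) hx_pos.le]
        ring
    _ ≤ y ^ p * |sin (π / y)| := by
        have hy_pos : 0 < y := by linarith
        gcongr ?_ ^ p * ?_
        exact half_abs_sin_pi_div_le hx_pos hy_lower hxy h

lemma oscillatingPower_le_integral_of_le_sq (hp : 0 ≤ p) (hx : x ∈ Ioo 0 1)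
    (hr : r ∈ Ioo 0 (1 / 6)) (hrx : r ≤ x ^ 2) :
    (3 / 4) ^ p / 8 * oscillatingPower p x * r ≤
      ∫ y in (x - r)..(x + r), oscillatingPower p y := by
  obtain ⟨hr_pos, hr_lt⟩ := hr
  suffices ∃ u, x - r ≤ u ∧ u + r / 4 ≤ x + r ∧ ∀ y ∈ Icc u (u + r / 4),
      (3 / 4) ^ p / 2 * oscillatingPower p x ≤ oscillatingPower p y by
    obtain ⟨u, hu_lower, hu_upper, hle⟩ := this
    have := sub_mul_le_integral_of_forall_le (integrable_oscillatingPower hp)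
      oscillatingPower_nonneg hu_lower (by linarith) hu_upper hle
    linarith
  rcases le_total 0 (sin (2 * (π / x))) with hsin | hsin
  · refine ⟨x - r / 4, by linarith, by linarith, fun y ⟨hy_lower, hy_upper⟩ ↦ ?_⟩
    exact mul_oscillatingPower_le_oscillatingPower hp hx (by linarith [hx.2])
      (abs_le.2 ⟨by linarith, by linarith⟩) (mul_nonneg hsin (by linarith))
  · have hx_le : x ≤ 2 / 3 := by
      by_contra! hx_gt
      exact hsin.not_gt (sin_two_mul_pi_div_pos ⟨hx_gt, hx.2⟩)
    refine ⟨x, by linarith, by linarith, fun y ⟨hy_lower, hy_upper⟩ ↦ ?_⟩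
    exact mul_oscillatingPower_le_oscillatingPower hp hx (by linarith)
      (abs_le.2 ⟨by linarith, by linarith⟩) (mul_nonneg_of_nonpos_of_nonpos hsin (by linarith))

lemma rpow_le_integral_oscillatingPower_of_sq_le (hp : 0 ≤ p) (hx : 0 < x)
    (hr : r < 1 / 6) (hxr : x ^ 2 ≤ r) :
    x ^ p / 6 * r ≤ ∫ y in (x - r)..(x + r), oscillatingPower p y := by
  have hr_pos : 0 < r := (sq_pos_of_pos hx).trans_le hxr
  have hx_lt : x < 5 / 12 := by nlinarith
  have hmean : r / 6 ≤ ∫ y in x..(x + r), |sin (π / y)| := by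
    have hsq : (x + r) ^ 2 ≤ 2 * r := by
      calc (x + r) ^ 2 = x ^ 2 + (2 * x + r) * r := by ring
        _ ≤ r + 1 * r := by
            gcongr
            linarith
        _ = 2 * r := by ring
    have hdiv : (x + r) ^ 2 / (2 * π) ≤ r / 3 := by
      calc (x + r) ^ 2 / (2 * π) ≤ 2 * r / (2 * 3) :=
            div_le_div₀ (by positivity) hsq (by norm_num) (by linarith [pi_gt_three])
        _ = r / 3 := by ring
    linarith [le_integral_abs_sin_div hx (le_add_of_nonneg_right hr_pos.le) pi_pos]
  calc x ^ p / 6 * r = x ^ p * (r / 6) := by ring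
    _ ≤ x ^ p * ∫ y in x..(x + r), |sin (π / y)| := by gcongr
    _ = ∫ y in x..(x + r), x ^ p * |sin (π / y)| :=
        (intervalIntegral.integral_const_mul _ _).symm
    _ ≤ ∫ y in x..(x + r), oscillatingPower p y := by
        refine intervalIntegral.integral_mono_on (by linarith) ?_
          (integrable_oscillatingPower hp).intervalIntegrable fun y hy ↦ ?_
        · exact (intervalIntegrable_abs_sin_div π hx (by linarith)).const_mul _
        · rw [oscillatingPower_of_mem ⟨hx.trans_le hy.1, by linarith [hy.2]⟩]
          gcongr
          exact hy.1
    _ ≤ ∫ y in (x - r)..(x + r), oscillatingPower p y :=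
        intervalIntegral.integral_mono_interval (by linarith) (by linarith) le_rfl
          (.of_forall oscillatingPower_nonneg) (integrable_oscillatingPower hp).intervalIntegrable

lemma oscillatingPower_le_average (hp : 0 ≤ p) (hx : x ∈ Ioo 0 1) (hr : r ∈ Ioo 0 (1 / 6)) :
    (3 / 4) ^ p / 8 * oscillatingPower p x ≤
      (1 / r) * ∫ y in (x - r)..(x + r), oscillatingPower p y := by
  rw [one_div_mul_eq_div, le_div_iff₀ hr.1]
  rcases le_total r (x ^ 2) with hrx | hxr
  · exact oscillatingPower_le_integral_of_le_sq hp hx hr hrx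
  · refine le_trans ?_ (rpow_le_integral_oscillatingPower_of_sq_le hp hx.1 hr.2 hxr)
    have hr_nonneg : 0 ≤ r := hr.1.le
    have hpow : ((3 : ℝ) / 4) ^ p ≤ 1 := rpow_le_one (by norm_num) (by norm_num) hp
    have hxp : 0 ≤ x ^ p := rpow_nonneg hx.1.le p
    gcongr
    calc (3 / 4) ^ p / 8 * oscillatingPower p x ≤ 1 / 8 * x ^ p := by
          gcongr ?_ / 8 * ?_
          · exact oscillatingPower_nonneg x
          · exact oscillatingPower_le_rpow hx.1.le
      _ ≤ x ^ p / 6 := by linarith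

end OscillatingPower

theorem stmt_19_general (p : ℝ) (hp : 0 ≤ p) (cp : ℝ) (hcp : 0 ≤ cp)
    (f : ℝ → ℝ)
    (hf : ∀ x : ℝ, f x = if x ∈ Set.Ioo (0 : ℝ) 1
      then cp * x ^ p * |Real.sin (Real.pi / x)| else 0) :
    ∃ c : ℝ, 0 < c ∧ ∀ x ∈ Set.Ioo (0 : ℝ) 1, ∀ r ∈ Set.Ioo (0 : ℝ) (1 / 6),
      c * f x ≤ (1 / r) * ∫ y in (x - r)..(x + r), f y := by
  obtain rfl : f = fun x ↦ cp * oscillatingPower p x := by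
    funext x
    simp only [hf, oscillatingPower, Set.indicator_apply, mul_ite, mul_zero, mul_assoc]
  refine ⟨(3 / 4) ^ p / 8, by positivity, fun x hx r hr ↦ ?_⟩
  rw [intervalIntegral.integral_const_mul, mul_left_comm, mul_left_comm (1 / r)]
  exact mul_le_mul_of_nonneg_left (oscillatingPower_le_average hp hx hr) hcp

theorem stmt_19 (p : ℝ) (hp : 2 ≤ p) (cp : ℝ) (hcp : 0 < cp)
    (f : ℝ → ℝ)
    (hf : ∀ x : ℝ, f x = if x ∈ Set.Ioo (0:ℝ) 1
      then cp * x ^ p * |Real.sin (Real.pi / x)| else 0)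
    (hnorm : ∫ x, f x = 1) :
    ∃ c : ℝ, 0 < c ∧ ∀ x ∈ Set.Ioo (0:ℝ) 1, ∀ r ∈ Set.Ioo (0:ℝ) (1/6),
      c * f x ≤ (1/r) * ∫ y in (x-r)..(x+r), f y :=
  stmt_19_general p (zero_le_two.trans hp) cp hcp.le f hf
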